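/- Under the causal model G1, fix a time index t with 2 ≤ t ≤ T and an intervention value w* for the transition covariate. Let C' range over configurations c = (x_t, v_t, z_{t−1}, S_{t−1}). Assuming that P(w_t = w*, c) > 0 for every configuration c with P(c) > 0, the interventional marginal satisfies P(y_t = y | do(w_t = w*)) = Σ_c P(y_t = y | w_t = w*, c) P(c) = Σ_c Σ_{z_t} b_t(y | z_t, x_t, v_t, y_{t−1}) a_t(z_t | x_t, w*, z_{t−1}, y_{t−1}) P(c), for every value y. -/

import Mathlib

open Finset

/-- A trajectory of the six processes (u, x, v, w, z, y) over times 1..T; index 0 of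
`Fin (T+1)` is a dummy time whose value is pinned to `default` by the joint pmf. -/
structure Traj (U X V W Z Y : Type) (T : ℕ) where
  u : Fin (T + 1) → U
  x : Fin (T + 1) → X
  v : Fin (T + 1) → V
  w : Fin (T + 1) → W
  z : Fin (T + 1) → Z
  y : Fin (T + 1) → Y

/-- Trajectories are equivalent to a finite product of function types. -/
def trajEquiv (U X V W Z Y : Type) (T : ℕ) :
    Traj U X V W Z Y T ≃
      (Fin (T + 1) → U) × (Fin (T + 1) → X) × (Fin (T + 1) → V) × (Fin (T + 1) → W) ×
        (Fin (T + 1) → Z) × (Fin (T + 1) → Y) where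
  toFun τ := (τ.u, τ.x, τ.v, τ.w, τ.z, τ.y)
  invFun p := ⟨p.1, p.2.1, p.2.2.1, p.2.2.2.1, p.2.2.2.2.1, p.2.2.2.2.2⟩
  left_inv τ := rfl
  right_inv p := rfl

instance {U X V W Z Y : Type} {T : ℕ}
    [Fintype U] [Fintype X] [Fintype V] [Fintype W] [Fintype Z] [Fintype Y]
    [DecidableEq U] [DecidableEq X] [DecidableEq V] [DecidableEq W] [DecidableEq Z]
    [DecidableEq Y] : Fintype (Traj U X V W Z Y T) :=
  Fintype.ofEquiv _ (trajEquiv U X V W Z Y T).symm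

instance {U X V W Z Y : Type} {T : ℕ}
    [DecidableEq U] [DecidableEq X] [DecidableEq V] [DecidableEq W] [DecidableEq Z]
    [DecidableEq Y] : DecidableEq (Traj U X V W Z Y T) := fun a b =>
  decidable_of_iff
    (a.u = b.u ∧ a.x = b.x ∧ a.v = b.v ∧ a.w = b.w ∧ a.z = b.z ∧ a.y = b.y)
    (by cases a; cases b; simp)

/-- Time index t as an element of `Fin (T+1)` (defined for all naturals via truncation;
only used for t ≤ T). -/
def idx (T t : ℕ) : Fin (T + 1) := ⟨min t T, Nat.lt_succ_of_le (min_le_right t T)⟩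

open Classical in
/-- Probability of an event under a pmf on a finite type. -/
noncomputable def pr {α : Type*} [Fintype α] (p : α → ℝ) (E : α → Prop) : ℝ :=
  ∑ a, if E a then p a else 0

/-- Conditional probability P(E | F) = P(E ∧ F) / P(F). -/
noncomputable def cpr {α : Type*} [Fintype α] (p : α → ℝ) (E F : α → Prop) : ℝ :=
  pr p (fun a => E a ∧ F a) / pr p F

variable {U X V W Z Y : Type}
  [Fintype U] [Fintype X] [Fintype V] [Fintype W] [Fintype Z] [Fintype Y]
  [DecidableEq U] [DecidableEq X] [DecidableEq V] [DecidableEq W] [DecidableEq Z] [DecidableEq Y]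
  [Inhabited U] [Inhabited X] [Inhabited V] [Inhabited W] [Inhabited Z] [Inhabited Y]

/-- Joint pmf of the causal model G1:
P = q_1(u_1) ∏_{t=2}^T q_u(u_t|u_{t-1}) ∏_{t=1}^T q_x(x_t|u_t) q_v(v_t|u_t) q_w(w_t|u_t)
  · a_1(z_1|x_1,w_1) b_1(y_1|z_1,x_1,v_1)
  · ∏_{t=2}^T a_t(z_t|x_t,w_t,z_{t-1},y_{t-1}) b_t(y_t|z_t,x_t,v_t,y_{t-1});
the dummy time-0 coordinates are pinned to `default` so that this is a pmf. -/
noncomputable def jointG1 (T : ℕ)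
    (q1 : U → ℝ) (qu : U → U → ℝ) (qx : X → U → ℝ) (qv : V → U → ℝ) (qw : W → U → ℝ)
    (a1 : Z → X → W → ℝ) (b1 : Y → Z → X → V → ℝ)
    (a : ℕ → Z → X → W → Z → Y → ℝ) (b : ℕ → Y → Z → X → V → Y → ℝ)
    (τ : Traj U X V W Z Y T) : ℝ :=
  (if τ.u (idx T 0) = default ∧ τ.x (idx T 0) = default ∧ τ.v (idx T 0) = default ∧
      τ.w (idx T 0) = default ∧ τ.z (idx T 0) = default ∧ τ.y (idx T 0) = default
    then 1 else 0) *
  (q1 (τ.u (idx T 1)) * ∏ j ∈ Finset.Icc 2 T, qu (τ.u (idx T j)) (τ.u (idx T (j - 1)))) *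
  (∏ j ∈ Finset.Icc 1 T,
    (qx (τ.x (idx T j)) (τ.u (idx T j)) * qv (τ.v (idx T j)) (τ.u (idx T j)) *
      qw (τ.w (idx T j)) (τ.u (idx T j)))) *
  (a1 (τ.z (idx T 1)) (τ.x (idx T 1)) (τ.w (idx T 1)) *
    b1 (τ.y (idx T 1)) (τ.z (idx T 1)) (τ.x (idx T 1)) (τ.v (idx T 1)) *
    ∏ j ∈ Finset.Icc 2 T,
      (a j (τ.z (idx T j)) (τ.x (idx T j)) (τ.w (idx T j)) (τ.z (idx T (j - 1)))
          (τ.y (idx T (j - 1))) *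
        b j (τ.y (idx T j)) (τ.z (idx T j)) (τ.x (idx T j)) (τ.v (idx T j))
          (τ.y (idx T (j - 1)))))

/-- Interventional pmf of G1 under do(x_j = xs j) for j ∈ J: the truncated factorization,
with the factors q_x(x_j | u_j), j ∈ J, deleted and x_j fixed to xs j. -/
noncomputable def doxG1 (T : ℕ) (J : Finset ℕ) (xs : ℕ → X)
    (q1 : U → ℝ) (qu : U → U → ℝ) (qx : X → U → ℝ) (qv : V → U → ℝ) (qw : W → U → ℝ)
    (a1 : Z → X → W → ℝ) (b1 : Y → Z → X → V → ℝ)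
    (a : ℕ → Z → X → W → Z → Y → ℝ) (b : ℕ → Y → Z → X → V → Y → ℝ)
    (τ : Traj U X V W Z Y T) : ℝ :=
  (if τ.u (idx T 0) = default ∧ τ.x (idx T 0) = default ∧ τ.v (idx T 0) = default ∧
      τ.w (idx T 0) = default ∧ τ.z (idx T 0) = default ∧ τ.y (idx T 0) = default
    then 1 else 0) *
  (q1 (τ.u (idx T 1)) * ∏ j ∈ Finset.Icc 2 T, qu (τ.u (idx T j)) (τ.u (idx T (j - 1)))) *
  (∏ j ∈ Finset.Icc 1 T,
    ((if j ∈ J then (if τ.x (idx T j) = xs j then 1 else 0)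
      else qx (τ.x (idx T j)) (τ.u (idx T j))) *
      qv (τ.v (idx T j)) (τ.u (idx T j)) * qw (τ.w (idx T j)) (τ.u (idx T j)))) *
  (a1 (τ.z (idx T 1)) (τ.x (idx T 1)) (τ.w (idx T 1)) *
    b1 (τ.y (idx T 1)) (τ.z (idx T 1)) (τ.x (idx T 1)) (τ.v (idx T 1)) *
    ∏ j ∈ Finset.Icc 2 T,
      (a j (τ.z (idx T j)) (τ.x (idx T j)) (τ.w (idx T j)) (τ.z (idx T (j - 1)))
          (τ.y (idx T (j - 1))) *
        b j (τ.y (idx T j)) (τ.z (idx T j)) (τ.x (idx T j)) (τ.v (idx T j))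
          (τ.y (idx T (j - 1)))))

/-- The event that the trajectory agrees with the given past values
S_{t-1} = (y_{1:t-1}, x_{1:t-1}, v_{1:t-1}, w_{1:t-1}); histories are indexed by `Fin t`
with index j standing for time j (index 0 being the pinned dummy time). -/
def histEv (T t : ℕ) (τ : Traj U X V W Z Y T)
    (hy : Fin t → Y) (hx : Fin t → X) (hv : Fin t → V) (hw : Fin t → W) : Prop :=
  (∀ j : Fin t, τ.y (idx T j.val) = hy j) ∧ (∀ j : Fin t, τ.x (idx T j.val) = hx j) ∧
    (∀ j : Fin t, τ.v (idx T j.val) = hv j) ∧ (∀ j : Fin t, τ.w (idx T j.val) = hw j)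

variable {U X V W Z Y : Type}
  [Fintype U] [Fintype X] [Fintype V] [Fintype W] [Fintype Z] [Fintype Y]
  [DecidableEq U] [DecidableEq X] [DecidableEq V] [DecidableEq W] [DecidableEq Z]
  [DecidableEq Y]
  [Inhabited U] [Inhabited X] [Inhabited V] [Inhabited W] [Inhabited Z] [Inhabited Y]

/-- Interventional pmf of G1 under do(w_j = ws j) for j ∈ J: the truncated factorization,
with the factors q_w(w_j | u_j), j ∈ J, deleted and w_j fixed to ws j. -/
noncomputable def dowG1 (T : ℕ) (J : Finset ℕ) (ws : ℕ → W)
    (q1 : U → ℝ) (qu : U → U → ℝ) (qx : X → U → ℝ) (qv : V → U → ℝ) (qw : W → U → ℝ)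
    (a1 : Z → X → W → ℝ) (b1 : Y → Z → X → V → ℝ)
    (a : ℕ → Z → X → W → Z → Y → ℝ) (b : ℕ → Y → Z → X → V → Y → ℝ)
    (τ : Traj U X V W Z Y T) : ℝ :=
  (if τ.u (idx T 0) = default ∧ τ.x (idx T 0) = default ∧ τ.v (idx T 0) = default ∧
      τ.w (idx T 0) = default ∧ τ.z (idx T 0) = default ∧ τ.y (idx T 0) = default
    then 1 else 0) *
  (q1 (τ.u (idx T 1)) * ∏ j ∈ Finset.Icc 2 T, qu (τ.u (idx T j)) (τ.u (idx T (j - 1)))) *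
  (∏ j ∈ Finset.Icc 1 T,
    (qx (τ.x (idx T j)) (τ.u (idx T j)) * qv (τ.v (idx T j)) (τ.u (idx T j)) *
      (if j ∈ J then (if τ.w (idx T j) = ws j then 1 else 0)
        else qw (τ.w (idx T j)) (τ.u (idx T j))))) *
  (a1 (τ.z (idx T 1)) (τ.x (idx T 1)) (τ.w (idx T 1)) *
    b1 (τ.y (idx T 1)) (τ.z (idx T 1)) (τ.x (idx T 1)) (τ.v (idx T 1)) *
    ∏ j ∈ Finset.Icc 2 T,
      (a j (τ.z (idx T j)) (τ.x (idx T j)) (τ.w (idx T j)) (τ.z (idx T (j - 1)))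
          (τ.y (idx T (j - 1))) *
        b j (τ.y (idx T j)) (τ.z (idx T j)) (τ.x (idx T j)) (τ.v (idx T j))
          (τ.y (idx T (j - 1)))))

/-
In the joint state `(u_j, x_j, v_j, w_j, z_j, y_j)` the model G1 is a Markov chain, so the times
after `t` sum out. What remains is a back-door situation: the background, consisting of the states
before `t` and of `u_t`, `x_t`, `v_t`, keeps its law under an intervention on `w_t`, and given `w_t`
the law of `y_t` depends on the background only through the configuration `c`. Hence the law of
`c` is the same before and after the intervention, and `P(y_t = y | w_t = w*, c)` is the
one-step response `∑_{z_t} b_t a_t`.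
-/

section Law

variable {α β γ : Type*} [Fintype α]

/-- The law of the random variable `f` under the weights `p`, that is, the pushforward of `p`
along `f`. -/
noncomputable def law (p : α → ℝ) (f : α → β) (k : β) : ℝ := pr p (fun a => f a = k)

theorem pr_nonneg {p : α → ℝ} (hp : ∀ a, 0 ≤ p a) (E : α → Prop) : 0 ≤ pr p E :=
  Finset.sum_nonneg fun a _ => by split_ifs <;> simp [hp]

theorem sum_mul_law [Fintype β] (p : α → ℝ) (f : α → β) (g : β → ℝ) :
    ∑ k, g k * law p f k = ∑ a, g (f a) * p a := by
  classical
  simp only [law, pr, Finset.mul_sum]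
  rw [Finset.sum_comm]
  simp

theorem pr_law [Fintype β] (p : α → ℝ) (f : α → β) (E : β → Prop) :
    pr (law p f) E = pr p (fun a => E (f a)) := by
  classical
  simpa [pr] using sum_mul_law p f (fun k => if E k then 1 else 0)

theorem cpr_law [Fintype β] (p : α → ℝ) (f : α → β) (E F : β → Prop) :
    cpr (law p f) E F = cpr p (fun a => E (f a)) (fun a => F (f a)) := by
  simp only [cpr, pr_law]

theorem law_law [Fintype β] (p : α → ℝ) (f : α → β) (g : β → γ) :
    law (law p f) g = law p (g ∘ f) :=
  funext fun k => pr_law p f (fun b => g b = k)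

theorem law_equiv_apply (p : α → ℝ) (e : α ≃ β) (a : α) : law p e (e a) = p a := by
  classical
  simp [law, pr]

theorem law_fst_apply [Fintype β] (p : α × β → ℝ) (a : α) :
    law p Prod.fst a = ∑ b, p (a, b) := by
  classical
  simp [law, pr, Fintype.sum_prod_type_right]

end Law

section Backdoor

variable {E W Y C : Type*} [Fintype E] [Fintype W] [Fintype Y]

/-- The joint pmf of a background variable `e` with weights `m`, a treatment `w` drawn from
`q e`, and a response `y` whose law `r (c e) w` depends on the background only through the
adjustment variable `c e`. -/
def backdoorJoint (m : E → ℝ) (q : E → W → ℝ) (c : E → C) (r : C → W → Y → ℝ)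
    (ω : E × W × Y) : ℝ :=
  m ω.1 * q ω.1 ω.2.1 * r (c ω.1) ω.2.1 ω.2.2

variable (m : E → ℝ) (q : E → W → ℝ) (c : E → C) {r : C → W → Y → ℝ}

theorem pr_backdoorJoint_adjust (hq : ∀ e, ∑ w, q e w = 1) (hr : ∀ k w, ∑ y, r k w y = 1)
    (k : C) : pr (backdoorJoint m q c r) (fun ω => c ω.1 = k) = law m c k := by
  classical
  simp only [law, pr, backdoorJoint, Fintype.sum_prod_type]
  refine Finset.sum_congr rfl fun e _ => ?_
  split_ifs
  · simp only [← Finset.mul_sum, hr, mul_one, hq]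
  · simp

theorem cpr_backdoorJoint_response (hr : ∀ k w, ∑ y, r k w y = 1) {k : C} {w : W}
    (h : pr (backdoorJoint m q c r) (fun ω => ω.2.1 = w ∧ c ω.1 = k) ≠ 0) (y : Y) :
    cpr (backdoorJoint m q c r) (fun ω => ω.2.2 = y) (fun ω => ω.2.1 = w ∧ c ω.1 = k) =
      r k w y := by
  classical
  rw [cpr, div_eq_iff h]
  simp only [pr, backdoorJoint, Fintype.sum_prod_type, ite_and, Finset.sum_ite_irrel,
    Finset.sum_ite_eq', Finset.sum_const_zero, Finset.mem_univ, if_true, ← Finset.mul_sum, hr,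
    mul_one]
  rw [Finset.mul_sum]
  refine Finset.sum_congr rfl fun e _ => ?_
  split_ifs with he
  · rw [he, mul_comm]
  · simp

theorem pr_backdoorJoint_do [Fintype C] [DecidableEq W] (wstar : W) (y : Y) :
    pr (backdoorJoint m (fun _ w => if w = wstar then 1 else 0) c r) (fun ω => ω.2.2 = y) =
      ∑ k, r k wstar y * law m c k := by
  classical
  rw [sum_mul_law]
  simp [pr, backdoorJoint, Fintype.sum_prod_type, mul_comm]

theorem backdoor_plugin [Fintype C] [DecidableEq W] (hq : ∀ e, ∑ w, q e w = 1)
    (hr : ∀ k w, ∑ y, r k w y = 1) (wstar : W) (y : Y) :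
    pr (backdoorJoint m (fun _ w => if w = wstar then 1 else 0) c r) (fun ω => ω.2.2 = y) =
      ∑ k, r k wstar y * pr (backdoorJoint m q c r) (fun ω => c ω.1 = k) := by
  simp only [pr_backdoorJoint_do, pr_backdoorJoint_adjust m q c hq hr]

theorem backdoor_adjustment [Fintype C] [DecidableEq W] (hq : ∀ e, ∑ w, q e w = 1)
    (hr : ∀ k w, ∑ y, r k w y = 1) (wstar : W)
    (hpos : ∀ k, pr (backdoorJoint m q c r) (fun ω => c ω.1 = k) ≠ 0 →
      pr (backdoorJoint m q c r) (fun ω => ω.2.1 = wstar ∧ c ω.1 = k) ≠ 0) (y : Y) :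
    pr (backdoorJoint m (fun _ w => if w = wstar then 1 else 0) c r) (fun ω => ω.2.2 = y) =
      ∑ k, cpr (backdoorJoint m q c r) (fun ω => ω.2.2 = y)
          (fun ω => ω.2.1 = wstar ∧ c ω.1 = k) *
        pr (backdoorJoint m q c r) (fun ω => c ω.1 = k) := by
  rw [backdoor_plugin m q c hq hr]
  refine Finset.sum_congr rfl fun k _ => ?_
  by_cases hk : pr (backdoorJoint m q c r) (fun ω => c ω.1 = k) = 0
  · simp only [hk, mul_zero]
  · rw [cpr_backdoorJoint_response m q c hr (hpos k hk)]

end Backdoor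

theorem prod_Icc_one_ite {M : Type*} [CommMonoid M] {T : ℕ} (hT : 1 ≤ T) (f g : ℕ → M) :
    ∏ j ∈ Finset.Icc 1 T, (if j = 1 then f j else g j) = f 1 * ∏ j ∈ Finset.Icc 2 T, g j := by
  rw [← Finset.mul_prod_Ioc_eq_prod_Icc hT, if_pos rfl, ← Finset.Icc_succ_left_eq_Ioc]
  refine congrArg _ (Finset.prod_congr rfl fun j hj => if_neg ?_)
  exact (Nat.lt_of_succ_le (Finset.mem_Icc.1 hj).1).ne'

theorem prod_Icc_one_eq_prod_fin {M : Type*} [CommMonoid M] (f : ℕ → M) (n : ℕ) :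
    ∏ j ∈ Finset.Icc 1 n, f j = ∏ j : Fin n, f (j + 1) := by
  rw [Fin.prod_univ_eq_prod_range (fun j => f (j + 1)), Finset.range_eq_Ico,
    Finset.prod_Ico_add' f]
  rfl

theorem idx_val {T : ℕ} (i : Fin (T + 1)) : idx T i = i :=
  Fin.ext (min_eq_left (Nat.le_of_lt_succ i.isLt))

section MarkovChain

variable {S : Type*}

/-- The path weights of a time-inhomogeneous Markov chain up to time `n`, with initial weights
`ν`; `K j s s'` is the weight of moving at time `j` to `s` from `s'`. -/
def markovChain (ν : S → ℝ) (K : ℕ → S → S → ℝ) (n : ℕ) (ω : Fin (n + 1) → S) : ℝ :=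
  ν (ω 0) * ∏ j : Fin n, K (j + 1) (ω j.succ) (ω j.castSucc)

variable (ν : S → ℝ) {K : ℕ → S → S → ℝ} {n t T : ℕ}

theorem markovChain_succ (K : ℕ → S → S → ℝ) (ω : Fin (n + 2) → S) :
    markovChain ν K (n + 1) ω =
      markovChain ν K n (Fin.init ω) * K (n + 1) (ω (Fin.last _)) (Fin.init ω (Fin.last n)) := by
  simp only [markovChain, Fin.prod_univ_castSucc, mul_assoc]
  rfl

theorem markovChain_congr {K K' : ℕ → S → S → ℝ} (h : ∀ j ≤ n, K j = K' j) :
    markovChain ν K n = markovChain ν K' n := by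
  funext ω
  exact congrArg _ (Finset.prod_congr rfl fun j _ => by rw [h _ (by omega)])

theorem markovChain_eq_prod_Icc (K : ℕ → S → S → ℝ) (T : ℕ) (ω : Fin (T + 1) → S) :
    markovChain ν K T ω =
      ν (ω (idx T 0)) * ∏ j ∈ Finset.Icc 1 T, K j (ω (idx T j)) (ω (idx T (j - 1))) := by
  have h_zero : idx T 0 = 0 := idx_val 0
  have h_succ (j : Fin T) : idx T (j + 1) = j.succ := idx_val j.succ
  have h_cast (j : Fin T) : idx T j = j.castSucc := idx_val j.castSucc
  simp only [markovChain, prod_Icc_one_eq_prod_fin, Nat.add_sub_cancel, h_zero, h_succ, h_cast]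

variable [Fintype S]

theorem law_markovChain_init_last (K : ℕ → S → S → ℝ) :
    law (markovChain ν K (n + 1)) (fun ω => (Fin.init ω, ω (Fin.last _))) =
      fun p => markovChain ν K n p.1 * K (n + 1) p.2 (p.1 (Fin.last n)) := by
  funext p
  let e := (Fin.snocEquiv fun _ : Fin (n + 2) => S).symm.trans (Equiv.prodComm _ _)
  obtain ⟨ω, rfl⟩ := e.surjective p
  exact (law_equiv_apply _ e ω).trans (markovChain_succ ν K ω)

theorem law_markovChain_init (hK : ∀ s', ∑ s, K (n + 1) s s' = 1) :
    law (markovChain ν K (n + 1)) Fin.init = markovChain ν K n := by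
  have h := law_law (markovChain ν K (n + 1)) (fun ω => (Fin.init ω, ω (Fin.last _))) Prod.fst
  rw [law_markovChain_init_last] at h
  refine h.symm.trans (funext fun ω => ?_)
  simp only [law_fst_apply, ← Finset.mul_sum, hK, mul_one]

theorem law_markovChain_take (htT : t ≤ T)
    (hK : ∀ j, t < j → j ≤ T → ∀ s', ∑ s, K j s s' = 1) :
    law (markovChain ν K T) (Fin.take (t + 1) (Nat.succ_le_succ htT)) = markovChain ν K t := by
  induction T, htT using Nat.le_induction with
  | base => exact funext (law_equiv_apply _ (Equiv.refl _))
  | succ T htT ih =>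
    rw [← ih fun j h₁ h₂ => hK j h₁ (by omega),
      ← law_markovChain_init ν (hK (T + 1) (by omega) le_rfl), law_law]
    rfl

theorem law_markovChain_take_get (hn : n + 1 ≤ T)
    (hK : ∀ j, n + 1 < j → j ≤ T → ∀ s', ∑ s, K j s s' = 1) :
    law (markovChain ν K T)
        (fun ω => (Fin.take (n + 1) (by omega) ω, ω ⟨n + 1, Nat.lt_succ_of_le hn⟩)) =
      fun p => markovChain ν K n p.1 * K (n + 1) p.2 (p.1 (Fin.last n)) := by
  rw [← law_markovChain_init_last, ← law_markovChain_take ν hn hK, law_law]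
  rfl

end MarkovChain

section ModelG1

variable {U X V W Z Y : Type}

/-- The values `(u_j, x_j, v_j, w_j, z_j, y_j)` of the six processes at a single time. -/
@[ext]
structure State (U X V W Z Y : Type) where
  u : U
  x : X
  v : V
  w : W
  z : Z
  y : Y
deriving DecidableEq, Inhabited

/-- States as tuples. -/
def State.equivProd (U X V W Z Y : Type) :
    State U X V W Z Y ≃ U × X × V × W × Z × Y where
  toFun s := (s.u, s.x, s.v, s.w, s.z, s.y)
  invFun p := ⟨p.1, p.2.1, p.2.2.1, p.2.2.2.1, p.2.2.2.2.1, p.2.2.2.2.2⟩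

instance [Fintype U] [Fintype X] [Fintype V] [Fintype W] [Fintype Z] [Fintype Y] :
    Fintype (State U X V W Z Y) :=
  Fintype.ofEquiv _ (State.equivProd U X V W Z Y).symm

theorem State.sum_eq [Fintype U] [Fintype X] [Fintype V] [Fintype W] [Fintype Z] [Fintype Y]
    {M : Type*} [AddCommMonoid M] (f : State U X V W Z Y → M) :
    ∑ s, f s = ∑ u, ∑ x, ∑ v, ∑ w, ∑ z, ∑ y, f ⟨u, x, v, w, z, y⟩ := by
  rw [← (State.equivProd U X V W Z Y).symm.sum_comp]
  simp only [Fintype.sum_prod_type]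
  rfl

/-- The state of a trajectory at time `i`. -/
def Traj.state {T : ℕ} (τ : Traj U X V W Z Y T) (i : Fin (T + 1)) : State U X V W Z Y :=
  ⟨τ.u i, τ.x i, τ.v i, τ.w i, τ.z i, τ.y i⟩

/-- Trajectories as paths in the state space. -/
def Traj.stateEquiv (U X V W Z Y : Type) (T : ℕ) :
    Traj U X V W Z Y T ≃ (Fin (T + 1) → State U X V W Z Y) where
  toFun := Traj.state
  invFun ω := ⟨fun i => (ω i).u, fun i => (ω i).x, fun i => (ω i).v, fun i => (ω i).w,
    fun i => (ω i).z, fun i => (ω i).y⟩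

/-- The conditional law of `w_j` given `u_j` after the intervention `do(w_j = ws j)` for
`j ∈ J`. -/
def doLaw [DecidableEq W] (J : Finset ℕ) (ws : ℕ → W) (qw : W → U → ℝ) (j : ℕ) (w : W)
    (u : U) : ℝ :=
  if j ∈ J then (if w = ws j then 1 else 0) else qw w u

theorem sum_doLaw [Fintype W] [DecidableEq W] {qw : W → U → ℝ} (hqw : ∀ u, ∑ w, qw w u = 1)
    (J : Finset ℕ) (ws : ℕ → W) (j : ℕ) (u : U) : ∑ w, doLaw J ws qw j w u = 1 := by
  unfold doLaw
  split_ifs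
  · simp
  · exact hqw u

/-- The transition kernel of G1, from the state `s₀` at time `j - 1` to the state `s` at time
`j`, where the law of `w_j` given `u_j` may depend on `j`. At `j = 1` the previous state is the
dummy one and is ignored. -/
def kernelG1 (q1 : U → ℝ) (qu : U → U → ℝ) (qx : X → U → ℝ) (qv : V → U → ℝ)
    (qw : ℕ → W → U → ℝ) (a1 : Z → X → W → ℝ) (b1 : Y → Z → X → V → ℝ)
    (a : ℕ → Z → X → W → Z → Y → ℝ) (b : ℕ → Y → Z → X → V → Y → ℝ)
    (j : ℕ) (s s₀ : State U X V W Z Y) : ℝ :=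
  (if j = 1 then q1 s.u else qu s.u s₀.u) * (qx s.x s.u * qv s.v s.u * qw j s.w s.u) *
    (if j = 1 then a1 s.z s.x s.w * b1 s.y s.z s.x s.v
      else a j s.z s.x s.w s₀.z s₀.y * b j s.y s.z s.x s.v s₀.y)

/-- The point mass at the dummy state of time `0`. -/
def initG1 [DecidableEq U] [DecidableEq X] [DecidableEq V] [DecidableEq W] [DecidableEq Z]
    [DecidableEq Y] [Inhabited U] [Inhabited X] [Inhabited V] [Inhabited W] [Inhabited Z]
    [Inhabited Y] (s : State U X V W Z Y) : ℝ :=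
  if s = default then 1 else 0

/-- The factors of G1 that govern the times `2, …, T` sum to one over their first argument. -/
structure IsNormalizedG1 [Fintype U] [Fintype X] [Fintype V] [Fintype W] [Fintype Z] [Fintype Y]
    (T : ℕ) (qu : U → U → ℝ) (qx : X → U → ℝ) (qv : V → U → ℝ) (qw : W → U → ℝ)
    (a : ℕ → Z → X → W → Z → Y → ℝ) (b : ℕ → Y → Z → X → V → Y → ℝ) : Prop where
  sum_qu : ∀ u₀, ∑ u, qu u u₀ = 1
  sum_qx : ∀ u, ∑ x, qx x u = 1
  sum_qv : ∀ u, ∑ v, qv v u = 1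
  sum_qw : ∀ u, ∑ w, qw w u = 1
  sum_a : ∀ j, 2 ≤ j → j ≤ T → ∀ x w z₀ y₀, ∑ z, a j z x w z₀ y₀ = 1
  sum_b : ∀ j, 2 ≤ j → j ≤ T → ∀ z x v y₀, ∑ y, b j y z x v y₀ = 1

/-- The background of the treatment `w_{n+1}`: the states at the times `0, …, n`, together with
`u_{n+1}`, `x_{n+1}` and `v_{n+1}`. The treatment time is written `n + 1` to avoid the truncated
subtraction `t - 1`. -/
abbrev Background (U X V W Z Y : Type) (n : ℕ) : Type :=
  (Fin (n + 1) → State U X V W Z Y) × U × X × V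

/-- The type of the configurations `c = (x_t, v_t, z_{t-1}, S_{t-1})`. -/
abbrev Config (X V W Z Y : Type) (t : ℕ) : Type :=
  X × V × Z × (Fin t → Y) × (Fin t → X) × (Fin t → V) × (Fin t → W)

/-- The configuration contained in a background. -/
def Background.config {n : ℕ} : Background U X V W Z Y n → Config X V W Z Y (n + 1)
  | (h, _, x, v) => (x, v, (h (Fin.last n)).z, fun j => (h j).y, fun j => (h j).x,
      fun j => (h j).v, fun j => (h j).w)

/-- The conditional law of `y_{n+1}` given `w_{n+1}` and the configuration, obtained by summing
out `z_{n+1}`. -/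
def responseG1 [Fintype Z] (a : ℕ → Z → X → W → Z → Y → ℝ) (b : ℕ → Y → Z → X → V → Y → ℝ)
    (n : ℕ) : Config X V W Z Y (n + 1) → W → Y → ℝ
  | (x, v, z', hy, _), w, y =>
      ∑ z, b (n + 1) y z x v (hy (Fin.last n)) * a (n + 1) z x w z' (hy (Fin.last n))

/-- The background, treatment and response at time `n + 1`, read off the states up to time `n`
and the state at time `n + 1`. -/
def observeStep {n : ℕ} : (Fin (n + 1) → State U X V W Z Y) × State U X V W Z Y →
    Background U X V W Z Y n × W × Y
  | (h, s) => ((h, s.u, s.x, s.v), s.w, s.y)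

/-- The background, treatment and response of a trajectory at time `n + 1`. -/
def Traj.observe {T : ℕ} (n : ℕ) (τ : Traj U X V W Z Y T) : Background U X V W Z Y n × W × Y :=
  ((fun j => τ.state (idx T j), τ.u (idx T (n + 1)), τ.x (idx T (n + 1)), τ.v (idx T (n + 1))),
    τ.w (idx T (n + 1)), τ.y (idx T (n + 1)))

theorem Traj.config_observe_eq_iff {T n : ℕ} (τ : Traj U X V W Z Y T) (xt : X) (vt : V) (zt1 : Z)
    (hy : Fin (n + 1) → Y) (hx : Fin (n + 1) → X) (hv : Fin (n + 1) → V)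
    (hw : Fin (n + 1) → W) :
    Background.config (τ.observe n).1 = (xt, vt, zt1, hy, hx, hv, hw) ↔
      τ.x (idx T (n + 1)) = xt ∧ τ.v (idx T (n + 1)) = vt ∧ τ.z (idx T n) = zt1 ∧
        histEv T (n + 1) τ hy hx hv hw := by
  simp [Background.config, Traj.observe, Traj.state, histEv, funext_iff]

theorem Traj.observe_eq_comp {T n : ℕ} (hnT : n + 1 ≤ T) :
    (Traj.observe n : Traj U X V W Z Y T → _) = observeStep ∘
      (fun ω => (Fin.take (n + 1) (by omega) ω, ω ⟨n + 1, Nat.lt_succ_of_le hnT⟩)) ∘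
        Traj.state := by
  have h_take (j : Fin (n + 1)) : idx T j = Fin.castLE (Nat.le_succ_of_le hnT) j :=
    idx_val (Fin.castLE _ j)
  have h_get : idx T (n + 1) = ⟨n + 1, Nat.lt_succ_of_le hnT⟩ :=
    idx_val ⟨n + 1, Nat.lt_succ_of_le hnT⟩
  funext τ
  simp only [Traj.observe, h_take, h_get]
  rfl

/-- The weight of a background, that is, all factors of G1 up to time `n` together with those of
`u_{n+1}`, `x_{n+1}` and `v_{n+1}`. -/
def backgroundWeight [DecidableEq U] [DecidableEq X] [DecidableEq V] [DecidableEq W]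
    [DecidableEq Z] [DecidableEq Y] [Inhabited U] [Inhabited X] [Inhabited V] [Inhabited W]
    [Inhabited Z] [Inhabited Y]
    (q1 : U → ℝ) (qu : U → U → ℝ) (qx : X → U → ℝ) (qv : V → U → ℝ) (qw : W → U → ℝ)
    (a1 : Z → X → W → ℝ) (b1 : Y → Z → X → V → ℝ)
    (a : ℕ → Z → X → W → Z → Y → ℝ) (b : ℕ → Y → Z → X → V → Y → ℝ) (n : ℕ) :
    Background U X V W Z Y n → ℝ
  | (h, u, x, v) => markovChain initG1 (kernelG1 q1 qu qx qv (fun _ => qw) a1 b1 a b) n h *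
      (qu u (h (Fin.last n)).u * qx x u * qv v u)

section Weights

variable {q1 : U → ℝ} {qu : U → U → ℝ} {qx : X → U → ℝ} {qv : V → U → ℝ}
  {a1 : Z → X → W → ℝ} {b1 : Y → Z → X → V → ℝ}
  {a : ℕ → Z → X → W → Z → Y → ℝ} {b : ℕ → Y → Z → X → V → Y → ℝ}

theorem IsNormalizedG1.sum_kernelG1 [Fintype U] [Fintype X] [Fintype V] [Fintype W]
    [Fintype Z] [Fintype Y] [DecidableEq W] {T j : ℕ} {qw : W → U → ℝ}
    (h : IsNormalizedG1 T qu qx qv qw a b) (J : Finset ℕ) (ws : ℕ → W) (hj : 2 ≤ j)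
    (hjT : j ≤ T) (s' : State U X V W Z Y) :
    ∑ s, kernelG1 q1 qu qx qv (doLaw J ws qw) a1 b1 a b j s s' = 1 := by
  simp only [State.sum_eq, kernelG1, if_neg (show j ≠ 1 by omega), ← Finset.mul_sum,
    h.sum_b j hj hjT, h.sum_a j hj hjT, sum_doLaw h.sum_qw, h.sum_qv, h.sum_qx, h.sum_qu, mul_one]

theorem IsNormalizedG1.sum_responseG1 [Fintype U] [Fintype X] [Fintype V] [Fintype W]
    [Fintype Z] [Fintype Y] {T n : ℕ} {qw : W → U → ℝ} (h : IsNormalizedG1 T qu qx qv qw a b)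
    (hn : 1 ≤ n) (hnT : n + 1 ≤ T) (c : Config X V W Z Y (n + 1)) (w : W) :
    ∑ y, responseG1 a b n c w y = 1 := by
  obtain ⟨x, v, z', hy, -⟩ := c
  simp only [responseG1]
  rw [Finset.sum_comm]
  simp only [← Finset.sum_mul, h.sum_a (n + 1) (by omega) hnT, h.sum_b (n + 1) (by omega) hnT,
    one_mul]

theorem law_observeStep_apply [Fintype U] [Fintype X] [Fintype V] [Fintype W] [Fintype Z]
    [Fintype Y] {n : ℕ} (p : (Fin (n + 1) → State U X V W Z Y) × State U X V W Z Y → ℝ)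
    (h : Fin (n + 1) → State U X V W Z Y) (u : U) (x : X) (v : V) (w : W) (y : Y) :
    law p observeStep ((h, u, x, v), w, y) = ∑ z, p (h, ⟨u, x, v, w, z, y⟩) := by
  classical
  simp only [law, pr, observeStep, Fintype.sum_prod_type, State.sum_eq,
    Prod.mk.injEq, and_assoc, ite_and, Finset.sum_ite_irrel, Finset.sum_ite_eq',
    Finset.sum_const_zero, Finset.mem_univ, if_true]

variable [DecidableEq U] [DecidableEq X] [DecidableEq V] [DecidableEq W] [DecidableEq Z]
  [DecidableEq Y]
  [Inhabited U] [Inhabited X] [Inhabited V] [Inhabited W] [Inhabited Z] [Inhabited Y]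

theorem jointG1_eq_dowG1_empty (T : ℕ) (ws : ℕ → W) (qw : W → U → ℝ) :
    jointG1 T q1 qu qx qv qw a1 b1 a b = dowG1 T ∅ ws q1 qu qx qv qw a1 b1 a b := by
  funext τ
  simp only [jointG1, dowG1, Finset.notMem_empty, if_false]

theorem initG1_state {T : ℕ} (τ : Traj U X V W Z Y T) (i : Fin (T + 1)) :
    initG1 (τ.state i) =
      if τ.u i = default ∧ τ.x i = default ∧ τ.v i = default ∧ τ.w i = default ∧
        τ.z i = default ∧ τ.y i = default then 1 else 0 :=
  if_congr State.ext_iff rfl rfl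

theorem dowG1_eq_markovChain {T : ℕ} (hT : 1 ≤ T) (J : Finset ℕ) (ws : ℕ → W)
    (qw : W → U → ℝ) (τ : Traj U X V W Z Y T) :
    dowG1 T J ws q1 qu qx qv qw a1 b1 a b τ =
      markovChain initG1 (kernelG1 q1 qu qx qv (doLaw J ws qw) a1 b1 a b) T τ.state := by
  simp only [markovChain_eq_prod_Icc, initG1_state, kernelG1, Finset.prod_mul_distrib,
    prod_Icc_one_ite hT]
  simp only [dowG1, doLaw, Traj.state, Finset.prod_mul_distrib, mul_assoc]
  rfl

theorem jointG1_nonneg {T : ℕ} {qw : W → U → ℝ} (hq1 : ∀ u, 0 ≤ q1 u)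
    (hqu : ∀ u' u, 0 ≤ qu u u') (hqx : ∀ u x, 0 ≤ qx x u) (hqv : ∀ u v, 0 ≤ qv v u)
    (hqw : ∀ u w, 0 ≤ qw w u) (ha1 : ∀ x w z, 0 ≤ a1 z x w) (hb1 : ∀ z x v y, 0 ≤ b1 y z x v)
    (ha : ∀ j, 2 ≤ j → j ≤ T → ∀ x w z' y' z, 0 ≤ a j z x w z' y')
    (hb : ∀ j, 2 ≤ j → j ≤ T → ∀ z x v y' y, 0 ≤ b j y z x v y')
    (τ : Traj U X V W Z Y T) : 0 ≤ jointG1 T q1 qu qx qv qw a1 b1 a b τ := by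
  have hab : ∀ j ∈ Finset.Icc 2 T, ∀ z x w z' y' y v, 0 ≤ a j z x w z' y' * b j y z x v y' := by
    intro j hj z x w z' y' y v
    obtain ⟨hj, hjT⟩ := Finset.mem_Icc.1 hj
    exact mul_nonneg (ha j hj hjT _ _ _ _ _) (hb j hj hjT _ _ _ _ _)
  unfold jointG1
  refine mul_nonneg (mul_nonneg (mul_nonneg (by positivity) (mul_nonneg (hq1 _) ?_)) ?_)
    (mul_nonneg (mul_nonneg (ha1 _ _ _) (hb1 _ _ _ _)) ?_)
  · exact Finset.prod_nonneg fun j _ => hqu _ _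
  · exact Finset.prod_nonneg fun j _ => mul_nonneg (mul_nonneg (hqx _ _) (hqv _ _)) (hqw _ _)
  · exact Finset.prod_nonneg fun j hj => hab j hj _ _ _ _ _ _ _

variable [Fintype U] [Fintype X] [Fintype V] [Fintype W] [Fintype Z] [Fintype Y]

theorem law_dowG1_state {T : ℕ} (hT : 1 ≤ T) (J : Finset ℕ) (ws : ℕ → W)
    (qw : W → U → ℝ) :
    law (dowG1 T J ws q1 qu qx qv qw a1 b1 a b) Traj.state =
      markovChain initG1 (kernelG1 q1 qu qx qv (doLaw J ws qw) a1 b1 a b) T := by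
  funext ω
  obtain ⟨τ, rfl⟩ := (Traj.stateEquiv U X V W Z Y T).surjective ω
  exact (law_equiv_apply _ (Traj.stateEquiv U X V W Z Y T) τ).trans
    (dowG1_eq_markovChain hT J ws qw τ)

theorem law_dowG1_observe {T n : ℕ} (hn : 1 ≤ n) (hnT : n + 1 ≤ T) {qw : W → U → ℝ}
    (h : IsNormalizedG1 T qu qx qv qw a b) {J : Finset ℕ} (hJ : ∀ j ∈ J, n < j) (ws : ℕ → W) :
    law (dowG1 T J ws q1 qu qx qv qw a1 b1 a b) (Traj.observe n) =
      backdoorJoint (backgroundWeight q1 qu qx qv qw a1 b1 a b n)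
        (fun e w => doLaw J ws qw (n + 1) w e.2.1) Background.config (responseG1 a b n) := by
  have h_past : markovChain initG1 (kernelG1 q1 qu qx qv (doLaw J ws qw) a1 b1 a b) n =
      markovChain initG1 (kernelG1 q1 qu qx qv (fun _ => qw) a1 b1 a b) n :=
    markovChain_congr _ fun j hj => by
      have : j ∉ J := fun hjJ => absurd (hJ j hjJ) (by omega)
      funext s s'
      simp only [kernelG1, doLaw, if_neg this]
  rw [Traj.observe_eq_comp hnT, ← law_law, ← law_law, law_dowG1_state (by omega),
    law_markovChain_take_get _ hnT fun j _ hjT => h.sum_kernelG1 J ws (by omega) hjT]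
  funext ⟨⟨hist, u, x, v⟩, w, y⟩
  simp only [law_observeStep_apply, backdoorJoint, h_past, kernelG1, backgroundWeight,
    responseG1, Background.config, if_neg (show n + 1 ≠ 1 by omega), Finset.mul_sum]
  exact Finset.sum_congr rfl fun z _ => by ring

theorem law_jointG1_observe {T n : ℕ} (hn : 1 ≤ n) (hnT : n + 1 ≤ T) {qw : W → U → ℝ}
    (h : IsNormalizedG1 T qu qx qv qw a b) :
    law (jointG1 T q1 qu qx qv qw a1 b1 a b) (Traj.observe n) =
      backdoorJoint (backgroundWeight q1 qu qx qv qw a1 b1 a b n)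
        (fun e w => qw w e.2.1) Background.config (responseG1 a b n) := by
  rw [jointG1_eq_dowG1_empty T default, law_dowG1_observe hn hnT h (by simp)]
  simp only [doLaw, Finset.notMem_empty, if_false]

theorem law_dowG1_singleton_observe {T n : ℕ} (hn : 1 ≤ n) (hnT : n + 1 ≤ T) {qw : W → U → ℝ}
    (h : IsNormalizedG1 T qu qx qv qw a b) (wstar : W) :
    law (dowG1 T {n + 1} (fun _ => wstar) q1 qu qx qv qw a1 b1 a b) (Traj.observe n) =
      backdoorJoint (backgroundWeight q1 qu qx qv qw a1 b1 a b n)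
        (fun _ w => if w = wstar then 1 else 0) Background.config (responseG1 a b n) := by
  rw [law_dowG1_observe hn hnT h (by simp)]
  simp only [doLaw, Finset.mem_singleton, if_true]

theorem pr_dowG1_eq_sum_responseG1 {T n : ℕ} (hn : 1 ≤ n) (hnT : n + 1 ≤ T) {qw : W → U → ℝ}
    (h : IsNormalizedG1 T qu qx qv qw a b) (wstar : W) (y : Y) :
    pr (dowG1 T {n + 1} (fun _ => wstar) q1 qu qx qv qw a1 b1 a b)
        (fun τ => τ.y (idx T (n + 1)) = y) =
      ∑ c, responseG1 a b n c wstar y *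
        pr (jointG1 T q1 qu qx qv qw a1 b1 a b)
          (fun τ => Background.config (τ.observe n).1 = c) := by
  have h_backdoor := backdoor_plugin (backgroundWeight q1 qu qx qv qw a1 b1 a b n)
    (fun e w => qw w e.2.1) Background.config (fun e => h.sum_qw e.2.1) (h.sum_responseG1 hn hnT)
    wstar y
  simp only [← law_jointG1_observe hn hnT h, ← law_dowG1_singleton_observe hn hnT h,
    pr_law] at h_backdoor
  exact h_backdoor

theorem pr_dowG1_eq_sum_cpr {T n : ℕ} (hn : 1 ≤ n) (hnT : n + 1 ≤ T) {qw : W → U → ℝ}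
    (h : IsNormalizedG1 T qu qx qv qw a b) (wstar : W)
    (hpos : ∀ c, pr (jointG1 T q1 qu qx qv qw a1 b1 a b)
        (fun τ => Background.config (τ.observe n).1 = c) ≠ 0 →
      pr (jointG1 T q1 qu qx qv qw a1 b1 a b)
        (fun τ => τ.w (idx T (n + 1)) = wstar ∧ Background.config (τ.observe n).1 = c) ≠ 0)
    (y : Y) :
    pr (dowG1 T {n + 1} (fun _ => wstar) q1 qu qx qv qw a1 b1 a b)
        (fun τ => τ.y (idx T (n + 1)) = y) =
      ∑ c, cpr (jointG1 T q1 qu qx qv qw a1 b1 a b) (fun τ => τ.y (idx T (n + 1)) = y)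
          (fun τ => τ.w (idx T (n + 1)) = wstar ∧ Background.config (τ.observe n).1 = c) *
        pr (jointG1 T q1 qu qx qv qw a1 b1 a b)
          (fun τ => Background.config (τ.observe n).1 = c) := by
  have h_backdoor := backdoor_adjustment (backgroundWeight q1 qu qx qv qw a1 b1 a b n)
    (fun e w => qw w e.2.1) Background.config (fun e => h.sum_qw e.2.1) (h.sum_responseG1 hn hnT)
    wstar
  simp only [← law_jointG1_observe hn hnT h, ← law_dowG1_singleton_observe hn hnT h,
    pr_law, cpr_law] at h_backdoor
  exact h_backdoor hpos y

end Weights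

end ModelG1

/-- Immediate causal effect of w_t, graph G1: with
C' = (x_t, v_t, z_{t-1}, S_{t-1}) and assuming P(w_t = w*, c) > 0 whenever P(c) > 0,
P(y_t = y | do(w_t = w*)) = Σ_c P(y_t = y | w_t = w*, c) P(c)
  = Σ_c Σ_{z_t} b_t(y | z_t, x_t, v_t, y_{t-1}) a_t(z_t | x_t, w*, z_{t-1}, y_{t-1}) P(c). -/
theorem statement_1
    (T t : ℕ) (ht2 : 2 ≤ t) (htT : t ≤ T) (wstar : W)
    (q1 : U → ℝ) (qu : U → U → ℝ) (qx : X → U → ℝ) (qv : V → U → ℝ) (qw : W → U → ℝ)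
    (a1 : Z → X → W → ℝ) (b1 : Y → Z → X → V → ℝ)
    (a : ℕ → Z → X → W → Z → Y → ℝ) (b : ℕ → Y → Z → X → V → Y → ℝ)
    (hq1 : (∀ u', 0 ≤ q1 u') ∧ (∑ u', q1 u') = 1)
    (hqu : ∀ u0, (∀ u', 0 ≤ qu u' u0) ∧ (∑ u', qu u' u0) = 1)
    (hqx : ∀ u0, (∀ x', 0 ≤ qx x' u0) ∧ (∑ x', qx x' u0) = 1)
    (hqv : ∀ u0, (∀ v', 0 ≤ qv v' u0) ∧ (∑ v', qv v' u0) = 1)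
    (hqw : ∀ u0, (∀ w', 0 ≤ qw w' u0) ∧ (∑ w', qw w' u0) = 1)
    (ha1 : ∀ x0 w0, (∀ z', 0 ≤ a1 z' x0 w0) ∧ (∑ z', a1 z' x0 w0) = 1)
    (hb1 : ∀ z0 x0 v0, (∀ y', 0 ≤ b1 y' z0 x0 v0) ∧ (∑ y', b1 y' z0 x0 v0) = 1)
    (ha : ∀ j, 2 ≤ j → j ≤ T → ∀ x0 w0 z0 y0,
      (∀ z', 0 ≤ a j z' x0 w0 z0 y0) ∧ (∑ z', a j z' x0 w0 z0 y0) = 1)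
    (hb : ∀ j, 2 ≤ j → j ≤ T → ∀ z0 x0 v0 y0,
      (∀ y', 0 ≤ b j y' z0 x0 v0 y0) ∧ (∑ y', b j y' z0 x0 v0 y0) = 1)
    (hpos : ∀ (xt : X) (vt : V) (zt1 : Z) (hy : Fin t → Y) (hx : Fin t → X)
        (hv : Fin t → V) (hw : Fin t → W),
      0 < pr (jointG1 T q1 qu qx qv qw a1 b1 a b)
          (fun τ => τ.x (idx T t) = xt ∧ τ.v (idx T t) = vt ∧
            τ.z (idx T (t - 1)) = zt1 ∧ histEv T t τ hy hx hv hw) →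
      0 < pr (jointG1 T q1 qu qx qv qw a1 b1 a b)
          (fun τ => τ.w (idx T t) = wstar ∧ τ.x (idx T t) = xt ∧ τ.v (idx T t) = vt ∧
            τ.z (idx T (t - 1)) = zt1 ∧ histEv T t τ hy hx hv hw)) :
    ∀ yv : Y,
      (pr (dowG1 T {t} (fun _ => wstar) q1 qu qx qv qw a1 b1 a b)
          (fun τ => τ.y (idx T t) = yv) =
        ∑ xt : X, ∑ vt : V, ∑ zt1 : Z, ∑ hy : Fin t → Y, ∑ hx : Fin t → X,
          ∑ hv : Fin t → V, ∑ hw : Fin t → W,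
          cpr (jointG1 T q1 qu qx qv qw a1 b1 a b) (fun τ => τ.y (idx T t) = yv)
            (fun τ => τ.w (idx T t) = wstar ∧ τ.x (idx T t) = xt ∧ τ.v (idx T t) = vt ∧
              τ.z (idx T (t - 1)) = zt1 ∧ histEv T t τ hy hx hv hw) *
          pr (jointG1 T q1 qu qx qv qw a1 b1 a b)
            (fun τ => τ.x (idx T t) = xt ∧ τ.v (idx T t) = vt ∧
              τ.z (idx T (t - 1)) = zt1 ∧ histEv T t τ hy hx hv hw)) ∧
      (pr (dowG1 T {t} (fun _ => wstar) q1 qu qx qv qw a1 b1 a b)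
          (fun τ => τ.y (idx T t) = yv) =
        ∑ xt : X, ∑ vt : V, ∑ zt1 : Z, ∑ hy : Fin t → Y, ∑ hx : Fin t → X,
          ∑ hv : Fin t → V, ∑ hw : Fin t → W,
          (∑ zt : Z, b t yv zt xt vt (hy ⟨t - 1, by omega⟩) *
              a t zt xt wstar zt1 (hy ⟨t - 1, by omega⟩)) *
          pr (jointG1 T q1 qu qx qv qw a1 b1 a b)
            (fun τ => τ.x (idx T t) = xt ∧ τ.v (idx T t) = vt ∧
              τ.z (idx T (t - 1)) = zt1 ∧ histEv T t τ hy hx hv hw)) := by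
  obtain ⟨n, rfl⟩ : ∃ n, t = n + 1 := ⟨t - 1, by omega⟩
  have h_norm : IsNormalizedG1 T qu qx qv qw a b :=
    ⟨fun u => (hqu u).2, fun u => (hqx u).2, fun u => (hqv u).2, fun u => (hqw u).2,
      fun j hj hjT x w z y => (ha j hj hjT x w z y).2,
      fun j hj hjT z x v y => (hb j hj hjT z x v y).2⟩
  have h_nonneg (τ : Traj U X V W Z Y T) : 0 ≤ jointG1 T q1 qu qx qv qw a1 b1 a b τ :=
    jointG1_nonneg hq1.1 (fun u => (hqu u).1) (fun u => (hqx u).1) (fun u => (hqv u).1)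
      (fun u => (hqw u).1) (fun x w => (ha1 x w).1) (fun z x v => (hb1 z x v).1)
      (fun j hj hjT x w z y => (ha j hj hjT x w z y).1)
      (fun j hj hjT z x v y => (hb j hj hjT z x v y).1) τ
  have h_pos : ∀ c, pr (jointG1 T q1 qu qx qv qw a1 b1 a b)
        (fun τ => Background.config (τ.observe n).1 = c) ≠ 0 →
      pr (jointG1 T q1 qu qx qv qw a1 b1 a b)
        (fun τ => τ.w (idx T (n + 1)) = wstar ∧ Background.config (τ.observe n).1 = c) ≠ 0 := by
    rintro ⟨x, v, z, hy, hx, hv, hw⟩ hc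
    have hc_pos := (pr_nonneg h_nonneg _).lt_of_ne' hc
    simp only [Traj.config_observe_eq_iff] at hc_pos ⊢
    exact (hpos x v z hy hx hv hw hc_pos).ne'
  refine fun y => ⟨?_, ?_⟩
  · simpa only [Fintype.sum_prod_type, Traj.config_observe_eq_iff, Nat.add_sub_cancel] using
      pr_dowG1_eq_sum_cpr (by omega) htT h_norm wstar h_pos y
  · simpa only [Fintype.sum_prod_type, Traj.config_observe_eq_iff, Nat.add_sub_cancel, responseG1,
      Fin.last] using pr_dowG1_eq_sum_responseG1 (by omega) htT h_norm wstar y
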